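/- Let (M, μ) be a measure space, let ε > 0 and N > 0 be real numbers, and let A : M → ℝ be a nonnegative μ-integrable function. Then the functional J(φ) = ∫_M A/(N (φ + ε)^N) dμ is well-defined and real-valued on Ω_ε, and J is continuous on Ω_ε with respect to the L¹(μ) distance: for every φ₀ ∈ Ω_ε and every ν > 0 there exists δ > 0 such that every φ ∈ Ω_ε with ‖φ − φ₀‖_{L¹(μ)} < δ satisfies |J(φ) − J(φ₀)| < ν. -/

import Mathlib

open MeasureTheory

/-!
On `φ ≥ c > -ε` the weight `(N (φ + ε) ^ N)⁻¹` is bounded by its value at `c` and continuous in `φ`,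
so the integrand is dominated by a fixed multiple of `‖A‖`. An `L¹`-convergent family converges in
measure, hence almost everywhere along a subsequence of any sequence, and dominated convergence
applies to that subsequence.
-/

open Filter Set
open scoped Topology

section ConvergenceInMeasure

variable {M ι E : Type*} [MeasurableSpace M] {μ : Measure M} [NormedAddCommGroup E]
  [NormedSpace ℝ E] {l : Filter ι}

theorem tendstoInMeasure_of_tendsto_integral_norm_sub {G : Type*} [NormedAddCommGroup G]
    {f : ι → M → G} {g : M → G} (hf : ∀ i, Integrable (f i) μ) (hg : Integrable g μ)
    (hfg : Tendsto (fun i ↦ ∫ x, ‖f i x - g x‖ ∂μ) l (𝓝 0)) : TendstoInMeasure μ f l g := by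
  have eLpNorm_eq (i : ι) : ENNReal.ofReal (∫ x, ‖f i x - g x‖ ∂μ) = eLpNorm (f i - g) 1 μ :=
    (ofReal_integral_norm_eq_lintegral_enorm ((hf i).sub hg)).trans
      eLpNorm_one_eq_lintegral_enorm.symm
  refine tendstoInMeasure_of_tendsto_eLpNorm one_ne_zero (fun i ↦ (hf i).aestronglyMeasurable)
    hg.aestronglyMeasurable ?_
  simpa only [eLpNorm_eq, ENNReal.ofReal_zero] using ENNReal.tendsto_ofReal hfg

theorem tendsto_integral_comp_of_tendstoInMeasure [l.IsCountablyGenerated] {X : Type*}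
    [PseudoEMetricSpace X] {S : Set X} {F : M → X → E} {bound : M → ℝ} {f : ι → M → X} {g : M → X}
    (hF_meas : ∀ i, AEStronglyMeasurable (fun x ↦ F x (f i x)) μ)
    (hF_cont : ∀ᵐ x ∂μ, ContinuousOn (F x) S)
    (hF_bound : ∀ᵐ x ∂μ, ∀ t ∈ S, ‖F x t‖ ≤ bound x) (h_bound : Integrable bound μ)
    (hf : ∀ i, ∀ᵐ x ∂μ, f i x ∈ S) (hg : ∀ᵐ x ∂μ, g x ∈ S) (hfg : TendstoInMeasure μ f l g) :
    Tendsto (fun i ↦ ∫ x, F x (f i x) ∂μ) l (𝓝 (∫ x, F x (g x) ∂μ)) := by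
  refine tendsto_of_subseq_tendsto fun u hu ↦ ?_
  obtain ⟨v, -, h_ae⟩ := (hfg.comp hu).exists_seq_tendsto_ae
  refine ⟨v, tendsto_integral_of_dominated_convergence bound (fun n ↦ hF_meas _) h_bound
    (fun n ↦ ?_) ?_⟩
  · filter_upwards [hF_bound, hf (u (v n))] with x hx hfx using hx _ hfx
  · have hf_seq : ∀ᵐ x ∂μ, ∀ n, f (u (v n)) x ∈ S := ae_all_iff.2 fun n ↦ hf _
    filter_upwards [h_ae, hF_cont, hf_seq, hg] with x hx hFx hfx hgx
    exact (hFx _ hgx).tendsto.comp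
      (tendsto_nhdsWithin_iff.2 ⟨hx, Eventually.of_forall hfx⟩)

end ConvergenceInMeasure

section PowerWeight

variable {M ι E : Type*} [MeasurableSpace M] {μ : Measure M} [NormedAddCommGroup E]
  [NormedSpace ℝ E] {l : Filter ι} {ε N c : ℝ}

theorem norm_inv_mul_add_rpow_le (hN : 0 < N) (hc : -ε < c) {t : ℝ} (ht : c ≤ t) :
    ‖(N * (t + ε) ^ N)⁻¹‖ ≤ (N * (c + ε) ^ N)⁻¹ := by
  have hcε : 0 < c + ε := by linarith
  have htε : 0 < t + ε := by linarith
  rw [Real.norm_of_nonneg (by positivity)]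
  gcongr

theorem continuousOn_inv_mul_add_rpow (ε N : ℝ) :
    ContinuousOn (fun t : ℝ ↦ (N * (t + ε) ^ N)⁻¹) (Ioi (-ε)) := by
  simp only [mul_inv]
  refine continuousOn_const.mul (ContinuousOn.inv₀ ?_ ?_)
  · exact (continuousOn_id.add continuousOn_const).rpow_const
      fun t ht ↦ .inl (neg_lt_iff_pos_add.1 ht).ne'
  · exact fun t ht ↦ (Real.rpow_pos_of_pos (neg_lt_iff_pos_add.1 ht) N).ne'

theorem integrable_inv_mul_add_rpow_smul {A : M → E} {φ : M → ℝ} (hN : 0 < N) (hc : -ε < c)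
    (hA : Integrable A μ) (hφ : AEMeasurable φ μ) (hφc : ∀ᵐ x ∂μ, c ≤ φ x) :
    Integrable (fun x ↦ (N * (φ x + ε) ^ N)⁻¹ • A x) μ :=
  hA.bdd_smul (N * (c + ε) ^ N)⁻¹
    (((hφ.add_const ε).pow_const N).const_mul N).inv.aestronglyMeasurable
    (hφc.mono fun _ ↦ norm_inv_mul_add_rpow_le hN hc)

theorem tendsto_integral_inv_mul_add_rpow_smul [l.IsCountablyGenerated] {A : M → E}
    {f : ι → M → ℝ} {φ : M → ℝ} (hN : 0 < N) (hc : -ε < c) (hA : Integrable A μ)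
    (hf : ∀ i, AEMeasurable (f i) μ) (hfc : ∀ i, ∀ᵐ x ∂μ, c ≤ f i x) (hφc : ∀ᵐ x ∂μ, c ≤ φ x)
    (hfφ : TendstoInMeasure μ f l φ) :
    Tendsto (fun i ↦ ∫ x, (N * (f i x + ε) ^ N)⁻¹ • A x ∂μ) l
      (𝓝 (∫ x, (N * (φ x + ε) ^ N)⁻¹ • A x ∂μ)) := by
  refine tendsto_integral_comp_of_tendstoInMeasure (S := Ici c)
    (F := fun x t ↦ (N * (t + ε) ^ N)⁻¹ • A x) (bound := fun x ↦ (N * (c + ε) ^ N)⁻¹ * ‖A x‖)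
    (fun i ↦ (integrable_inv_mul_add_rpow_smul hN hc hA (hf i) (hfc i)).aestronglyMeasurable)
    (.of_forall fun x ↦ ?_) (.of_forall fun x t ht ↦ ?_) (hA.norm.const_mul _) hfc hφc hfφ
  · exact ((continuousOn_inv_mul_add_rpow ε N).mono (Ici_subset_Ioi.2 hc)).smul continuousOn_const
  · rw [norm_smul]
    gcongr
    exact norm_inv_mul_add_rpow_le hN hc ht

theorem stmt1_general (μ : Measure M) (hN : 0 < N) (hc : -ε < c) {A : M → E}
    (hA : Integrable A μ) :
    let Ω : Set (M → ℝ) := {φ | Integrable φ μ ∧ ∀ᵐ x ∂μ, c ≤ φ x}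
    let J : (M → ℝ) → E := fun φ ↦ ∫ x, (N * (φ x + ε) ^ N)⁻¹ • A x ∂μ
    (∀ φ ∈ Ω, Integrable (fun x ↦ (N * (φ x + ε) ^ N)⁻¹ • A x) μ) ∧
    (∀ φ₀ ∈ Ω, ∀ ν : ℝ, 0 < ν → ∃ δ : ℝ, 0 < δ ∧ ∀ φ ∈ Ω,
      (∫ x, |φ x - φ₀ x| ∂μ) < δ → ‖J φ - J φ₀‖ < ν) := by
  intro Ω J
  refine ⟨fun φ hφ ↦ integrable_inv_mul_add_rpow_smul hN hc hA hφ.1.aemeasurable hφ.2,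
    fun φ₀ hφ₀ ν hν ↦ ?_⟩
  let dist₀ : Ω → ℝ := fun φ ↦ ∫ x, |φ.1 x - φ₀ x| ∂μ
  have tendsto_measure : TendstoInMeasure μ Subtype.val (comap dist₀ (𝓝 0)) φ₀ :=
    tendstoInMeasure_of_tendsto_integral_norm_sub (fun φ ↦ φ.2.1) hφ₀.1 tendsto_comap
  have tendsto_J : Tendsto (fun φ : Ω ↦ J φ) (comap dist₀ (𝓝 0)) (𝓝 (J φ₀)) :=
    tendsto_integral_inv_mul_add_rpow_smul hN hc hA (fun φ ↦ φ.2.1.aemeasurable)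
      (fun φ ↦ φ.2.2) hφ₀.2 tendsto_measure
  obtain ⟨δ, hδ, hJ⟩ :=
    ((Metric.nhds_basis_ball.comap dist₀).tendsto_iff Metric.nhds_basis_ball).1 tendsto_J ν hν
  refine ⟨δ, hδ, fun φ hφ hφδ ↦ mem_ball_iff_norm.1 (hJ ⟨φ, hφ⟩ ?_)⟩
  have dist₀_nonneg : 0 ≤ dist₀ ⟨φ, hφ⟩ := integral_nonneg fun x ↦ abs_nonneg _
  rwa [mem_preimage, mem_ball_zero_iff, Real.norm_of_nonneg dist₀_nonneg]

end PowerWeight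

/-- On a measure space `(M, μ)`, for `ε > 0`, `N > 0` and a nonnegative integrable
function `A`, the functional `J(φ) = ∫ A / (N (φ + ε)^N) dμ` is well-defined
(the integrand is integrable) on the set `Ω_ε` of integrable functions `φ ≥ -ε/2` a.e.,
and `J` is continuous on `Ω_ε` with respect to the `L¹(μ)` distance. -/
theorem stmt1 {M : Type*} [MeasurableSpace M] (μ : Measure M)
    (ε N : ℝ) (hε : 0 < ε) (hN : 0 < N)
    (A : M → ℝ) (hA0 : ∀ x, 0 ≤ A x) (hAint : Integrable A μ) :
    let Ω : Set (M → ℝ) := {φ | Integrable φ μ ∧ ∀ᵐ x ∂μ, -(ε / 2) ≤ φ x}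
    let J : (M → ℝ) → ℝ := fun φ => ∫ x, A x / (N * (φ x + ε) ^ N) ∂μ
    (∀ φ ∈ Ω, Integrable (fun x => A x / (N * (φ x + ε) ^ N)) μ) ∧
    (∀ φ₀ ∈ Ω, ∀ ν : ℝ, 0 < ν → ∃ δ : ℝ, 0 < δ ∧ ∀ φ ∈ Ω,
      (∫ x, |φ x - φ₀ x| ∂μ) < δ → |J φ - J φ₀| < ν) := by
  simpa only [div_eq_inv_mul _ (N * _), smul_eq_mul, Real.norm_eq_abs] using
    stmt1_general μ hN (neg_lt_neg (half_lt_self hε)) hAint
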